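/- Let R be a Leibniz conformal algebra, Q a ℂ[∂]-module, and Ω(R,Q) an extending datum in which ⇀_λ and ◁_λ are trivial, written Ω(R,Q) = (↼_λ, ▷_λ, f_λ, {·_λ·}). Then Ω(R,Q) is a Leibniz conformal extending structure (equivalently, the bracket [(a,x)_λ (b,y)] = ([a_λ b] + x▷_λ b + a↼_λ y + f_λ(x,y), {x_λ y}) makes R × Q a Leibniz conformal algebra, the crossed product R♮^f_{▷,↼} Q) if and only if (Q, {·_λ·}) is a Leibniz conformal algebra and for all a,b ∈ R, x,y,z ∈ Q: (C1) [a_λ b]↼_{λ+μ} x = [a_λ (b↼_μ x)] − [b_μ (a↼_λ x)]; (C2) x▷_μ [a_λ b] = [a_λ (x▷_μ b)] − [(a↼_λ x)_{λ+μ} b]; (C3) [(x▷_μ a)_{λ+μ} b] + [(a↼_λ x)_{λ+μ} b] = 0; (C4) a↼_λ {x_μ y} = (a↼_λ x)↼_{λ+μ} y + x▷_μ (a↼_λ y) − [a_λ f_μ(x,y)]; (C5) (x▷_μ a)↼_{λ+μ} y + (a↼_λ x)↼_{λ+μ} y = 0; (C6) {x_λ y}▷_{λ+μ} a = x▷_λ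 (y▷_μ a) − [f_λ(x,y)_{λ+μ} a] − y▷_μ (x▷_λ a); (C7) x▷_λ f_μ(y,z) = f_λ(x,y)↼_{λ+μ} z + f_{λ+μ}({x_λ y}, z) + y▷_μ f_λ(x,z) + f_μ(y, {x_λ z}) − f_λ(x, {y_μ z}). -/

import Mathlib

noncomputable section

/-- `g : ℂ → R` is (the evaluation of) a polynomial in `λ` with coefficients in `R`,
i.e. an element of `R[λ]`. -/
def IsPolyFun {R : Type*} [AddCommGroup R] [Module ℂ R] (g : ℂ → R) : Prop :=
  ∃ (N : ℕ) (c : ℕ → R), ∀ l : ℂ, g l = ∑ i ∈ Finset.range N, l ^ i • c i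

/-- A conformal bilinear map `U × V → W[λ]`, in evaluated form: `f_λ(∂u, v) = -λ f_λ(u,v)`
and `f_λ(u, ∂v) = (∂ + λ) f_λ(u,v)`. -/
structure IsConformalBilin {U V W : Type*}
    [AddCommGroup U] [Module ℂ U] [AddCommGroup V] [Module ℂ V]
    [AddCommGroup W] [Module ℂ W]
    (DU : Module.End ℂ U) (DV : Module.End ℂ V) (DW : Module.End ℂ W)
    (f : ℂ → U → V → W) : Prop where
  add_left : ∀ (l : ℂ) (a a' : U) (b : V), f l (a + a') b = f l a b + f l a' b
  smul_left : ∀ (l c : ℂ) (a : U) (b : V), f l (c • a) b = c • f l a b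
  add_right : ∀ (l : ℂ) (a : U) (b b' : V), f l a (b + b') = f l a b + f l a b'
  smul_right : ∀ (l c : ℂ) (a : U) (b : V), f l a (c • b) = c • f l a b
  poly : ∀ (a : U) (b : V), IsPolyFun (fun l => f l a b)
  conf_left : ∀ (l : ℂ) (a : U) (b : V), f l (DU a) b = (-l) • f l a b
  conf_right : ∀ (l : ℂ) (a : U) (b : V), f l a (DV b) = DW (f l a b) + l • f l a b

/-- A Leibniz conformal algebra structure on the `ℂ[∂]`-module `(R, D)`:
a conformal bilinear `λ`-bracket satisfying the Jacobi identity. -/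
structure IsLeibnizConformal {R : Type*} [AddCommGroup R] [Module ℂ R]
    (D : Module.End ℂ R) (br : ℂ → R → R → R) : Prop where
  bilin : IsConformalBilin D D D br
  jacobi : ∀ (l m : ℂ) (a b c : R),
    br l a (br m b c) = br (l + m) (br l a b) c + br m b (br l a c)

/-- An extending datum `Ω(R,Q) = (↼, ⇀, ◁, ▷, f, {·_λ·})` of a Leibniz conformal algebra
`R` by a `ℂ[∂]`-module `Q`: six conformal bilinear maps.  Here `lh = ↼`, `rh = ⇀`,
`lt = ◁`, `rt = ▷`, `fm = f`, `bq = {·_λ·}`. -/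
structure IsExtendingDatum {R Q : Type*}
    [AddCommGroup R] [Module ℂ R] [AddCommGroup Q] [Module ℂ Q]
    (DR : Module.End ℂ R) (DQ : Module.End ℂ Q)
    (lh : ℂ → R → Q → R) (rh : ℂ → R → Q → Q)
    (lt : ℂ → Q → R → Q) (rt : ℂ → Q → R → R)
    (fm : ℂ → Q → Q → R) (bq : ℂ → Q → Q → Q) : Prop where
  lh_bilin : IsConformalBilin DR DQ DR lh
  rh_bilin : IsConformalBilin DR DQ DQ rh
  lt_bilin : IsConformalBilin DQ DR DQ lt
  rt_bilin : IsConformalBilin DQ DR DR rt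
  fm_bilin : IsConformalBilin DQ DQ DR fm
  bq_bilin : IsConformalBilin DQ DQ DQ bq

/-- The unified product bracket on `R × Q`:
`[(a,x)_λ (b,y)] = ([a_λ b] + a↼_λ y + x▷_λ b + f_λ(x,y), a⇀_λ y + x◁_λ b + {x_λ y})`. -/
def unifiedBracket {R Q : Type*}
    [AddCommGroup R] [Module ℂ R] [AddCommGroup Q] [Module ℂ Q]
    (br : ℂ → R → R → R)
    (lh : ℂ → R → Q → R) (rh : ℂ → R → Q → Q)
    (lt : ℂ → Q → R → Q) (rt : ℂ → Q → R → R)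
    (fm : ℂ → Q → Q → R) (bq : ℂ → Q → Q → Q) :
    ℂ → R × Q → R × Q → R × Q :=
  fun l p q =>
    (br l p.1 q.1 + lh l p.1 q.2 + rt l p.2 q.1 + fm l p.2 q.2,
     rh l p.1 q.2 + lt l p.2 q.1 + bq l p.2 q.2)

theorem IsPolyFun.add' {R : Type*} [AddCommGroup R] [Module ℂ R] {g h : ℂ → R}
    (hg : IsPolyFun g) (hh : IsPolyFun h) : IsPolyFun (fun l => g l + h l) := by
  obtain ⟨N, c, hc⟩ := hg
  obtain ⟨M, d, hd⟩ := hh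
  have key : ∀ (N M : ℕ) (c : ℕ → R) (l : ℂ), ∑ i ∈ Finset.range N, l ^ i • c i =
      ∑ i ∈ Finset.range (N + M), l ^ i • (if i < N then c i else 0) := by
    intro N M c l
    rw [Finset.sum_range_add]
    have h1 : ∑ x ∈ Finset.range M, l ^ (N + x) • (if N + x < N then c (N + x) else 0) = 0 := by
      apply Finset.sum_eq_zero
      intro x _
      simp
    rw [h1, add_zero]
    apply Finset.sum_congr rfl
    intro i hi
    rw [if_pos (Finset.mem_range.mp hi)]
  refine ⟨N + M, fun i => (if i < N then c i else 0) + (if i < M then d i else 0), fun l => ?_⟩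
  simp only [smul_add, Finset.sum_add_distrib]
  rw [← key N M c l, add_comm N M, ← key M N d l, hc, hd]

theorem IsPolyFun.map' {R S : Type*} [AddCommGroup R] [Module ℂ R] [AddCommGroup S] [Module ℂ S]
    {g : ℂ → R} (φ : R →ₗ[ℂ] S) (hg : IsPolyFun g) : IsPolyFun (fun l => φ (g l)) := by
  obtain ⟨N, c, hc⟩ := hg
  exact ⟨N, fun i => φ (c i), fun l => by simp [hc]⟩

theorem IsPolyFun.prod' {R S : Type*} [AddCommGroup R] [Module ℂ R] [AddCommGroup S] [Module ℂ S]
    {g : ℂ → R} {h : ℂ → S} (hg : IsPolyFun g) (hh : IsPolyFun h) :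
    IsPolyFun (fun l => (g l, h l)) := by
  simpa using (hg.map' (LinearMap.inl ℂ R S)).add' (hh.map' (LinearMap.inr ℂ R S))

section
variable {U V W : Type*} [AddCommGroup U] [Module ℂ U] [AddCommGroup V] [Module ℂ V]
    [AddCommGroup W] [Module ℂ W]
    {DU : Module.End ℂ U} {DV : Module.End ℂ V} {DW : Module.End ℂ W} {f : ℂ → U → V → W}

theorem IsConformalBilin.zero_left' (h : IsConformalBilin DU DV DW f) (l : ℂ) (b : V) :
    f l 0 b = 0 := by
  simpa using h.smul_left l 0 0 b

theorem IsConformalBilin.zero_right' (h : IsConformalBilin DU DV DW f) (l : ℂ) (a : U) :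
    f l a 0 = 0 := by
  simpa using h.smul_right l 0 a 0
end

/-- For an extending datum with `⇀` and `◁` trivial, the crossed product
bracket `[(a,x)_λ (b,y)] = ([a_λ b] + x▷_λ b + a↼_λ y + f_λ(x,y), {x_λ y})` makes
`R × Q` a Leibniz conformal algebra if and only if `(Q, {·_λ·})` is a Leibniz conformal
algebra and conditions (C1)–(C7) hold. -/
theorem crossed_product_isLeibnizConformal_iff
    {R Q : Type*} [AddCommGroup R] [Module ℂ R] [AddCommGroup Q] [Module ℂ Q]
    (DR : Module.End ℂ R) (DQ : Module.End ℂ Q)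
    (br : ℂ → R → R → R) (hLeib : IsLeibnizConformal DR br)
    (lh : ℂ → R → Q → R) (rt : ℂ → Q → R → R)
    (fm : ℂ → Q → Q → R) (bq : ℂ → Q → Q → Q)
    (hlh : IsConformalBilin DR DQ DR lh) (hrt : IsConformalBilin DQ DR DR rt)
    (hfm : IsConformalBilin DQ DQ DR fm) (hbq : IsConformalBilin DQ DQ DQ bq) :
    IsLeibnizConformal (LinearMap.prodMap DR DQ)
      (unifiedBracket br lh (fun _ _ _ => 0) (fun _ _ _ => 0) rt fm bq) ↔
    (IsLeibnizConformal DQ bq ∧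
     (∀ (l m : ℂ) (a b : R) (x : Q),   -- (C1)
        lh (l + m) (br l a b) x = br l a (lh m b x) - br m b (lh l a x)) ∧
     (∀ (l m : ℂ) (a b : R) (x : Q),   -- (C2)
        rt m x (br l a b) = br l a (rt m x b) - br (l + m) (lh l a x) b) ∧
     (∀ (l m : ℂ) (a b : R) (x : Q),   -- (C3)
        br (l + m) (rt m x a) b + br (l + m) (lh l a x) b = 0) ∧
     (∀ (l m : ℂ) (a : R) (x y : Q),   -- (C4)
        lh l a (bq m x y)
          = lh (l + m) (lh l a x) y + rt m x (lh l a y) - br l a (fm m x y)) ∧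
     (∀ (l m : ℂ) (a : R) (x y : Q),   -- (C5)
        lh (l + m) (rt m x a) y + lh (l + m) (lh l a x) y = 0) ∧
     (∀ (l m : ℂ) (a : R) (x y : Q),   -- (C6)
        rt (l + m) (bq l x y) a
          = rt l x (rt m y a) - br (l + m) (fm l x y) a - rt m y (rt l x a)) ∧
     (∀ (l m : ℂ) (x y z : Q),         -- (C7)
        rt l x (fm m y z)
          = lh (l + m) (fm l x y) z + fm (l + m) (bq l x y) z + rt m y (fm l x z)
            + fm m y (bq l x z) - fm l x (bq m y z))) := by
  have hbr := hLeib.bilin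
  constructor
  · intro H
    have J := H.jacobi
    have J1 := fun l m p q r => congrArg Prod.fst (J l m p q r)
    have J2 := fun l m p q r => congrArg Prod.snd (J l m p q r)
    clear J
    simp only [unifiedBracket, Prod.fst_add, Prod.snd_add, zero_add, hbr.add_left, hbr.add_right, hlh.add_left,
      hrt.add_right] at J1 J2
    have c1 := fun l m a b x => J1 l m (a, 0) (b, 0) (0, x)
    have c2 := fun l m a b x => J1 l m (a, 0) (0, x) (b, 0)
    have c3 := fun l m a b x => J1 l m (0, x) (a, 0) (b, 0)
    have c4 := fun l m a x y => J1 l m (a, 0) (0, x) (0, y)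
    have c5 := fun l m a x y => J1 l m (0, x) (a, 0) (0, y)
    have c6 := fun l m a x y => J1 l m (0, x) (0, y) (a, 0)
    have c7 := fun l m x y z => J1 l m (0, x) (0, y) (0, z)
    have c8 := fun l m x y z => J2 l m (0, x) (0, y) (0, z)
    clear J1 J2
    simp only [hbr.zero_left', hbr.zero_right', hlh.zero_left', hlh.zero_right',
      hrt.zero_left', hrt.zero_right', hfm.zero_left', hfm.zero_right',
      hbq.zero_left', hbq.zero_right', add_zero, zero_add] at c1 c2 c3 c4 c5 c6 c7 c8
    refine ⟨⟨hbq, c8⟩, ?_, ?_, ?_, ?_, ?_, ?_, ?_⟩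
    · intro l m a b x
      linear_combination (norm := module) -c1 l m a b x
    · intro l m a b x
      linear_combination (norm := module) -c2 l m a b x
    · intro l m a b x
      have h := c3 m l a b x
      rw [add_comm m l] at h
      linear_combination (norm := module) -c2 l m a b x - h
    · intro l m a x y
      linear_combination (norm := module) c4 l m a x y
    · intro l m a x y
      have h := c5 m l a x y
      rw [add_comm m l] at h
      linear_combination (norm := module) -c4 l m a x y - h
    · intro l m a x y
      linear_combination (norm := module) -c6 l m a x y
    · intro l m x y z
      linear_combination (norm := module) c7 l m x y z
  · rintro ⟨HQ, C1, C2, C3, C4, C5, C6, C7⟩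
    refine ⟨⟨?_, ?_, ?_, ?_, ?_, ?_, ?_⟩, ?_⟩
    · intro l a a' b
      ext <;> simp [unifiedBracket, hbr.add_left, hlh.add_left, hrt.add_left, hfm.add_left,
        hbq.add_left]
      abel
    · intro l c a b
      ext <;> simp [unifiedBracket, hbr.smul_left, hlh.smul_left, hrt.smul_left, hfm.smul_left,
        hbq.smul_left]
    · intro l a a' b
      ext <;> simp [unifiedBracket, hbr.add_right, hlh.add_right, hrt.add_right, hfm.add_right,
        hbq.add_right]
      abel
    · intro l c a b
      ext <;> simp [unifiedBracket, hbr.smul_right, hlh.smul_right, hrt.smul_right,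
        hfm.smul_right, hbq.smul_right]
    · intro a b
      simp only [unifiedBracket, Prod.fst_add, Prod.snd_add, zero_add]
      exact ((((hbr.poly _ _).add' (hlh.poly _ _)).add' (hrt.poly _ _)).add'
        (hfm.poly _ _)).prod' (hbq.poly _ _)
    · intro l a b
      ext <;> simp [unifiedBracket, hbr.conf_left, hlh.conf_left, hrt.conf_left, hfm.conf_left,
        hbq.conf_left]
      abel
    · intro l a b
      ext <;> simp [unifiedBracket, hbr.conf_right, hlh.conf_right, hrt.conf_right,
        hfm.conf_right, hbq.conf_right]
      abel
    · rintro l m ⟨a, x⟩ ⟨b, y⟩ ⟨c, z⟩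
      ext
      · simp only [unifiedBracket, Prod.fst_add, Prod.snd_add, zero_add, hbr.add_left, hbr.add_right, hlh.add_left,
          hrt.add_right]
        have h2 := C2 m l b c x
        have h3 := C3 m l b c x
        have h4 := C4 m l b x z
        have h5 := C5 m l b x z
        rw [add_comm m l] at h2 h3 h4 h5
        linear_combination (norm := module) hLeib.jacobi l m a b c - C1 l m a b z - C2 l m a c y
          + h2 - h3 + C4 l m a y z - h4 - h5 - C6 l m c x y + C7 l m x y z
      · simpa only [unifiedBracket, Prod.fst_add, Prod.snd_add, zero_add] using HQ.jacobi l m x y z
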